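/- arXiv:1801.00204 — 2 statements merged into one kernel-verified Lean document; each statement's English description precedes it below -/
import Mathlib

section
/- Let c ∈ ℝ with -1 < c < 0. If z ∈ Z and (wₙ)_{n≥0} is a bounded backward orbit of z, then wₙ → θ as n → ∞; consequently Z ∩ K⁻ ⊆ W^u(θ). -/
open Set Filter Topology

/-- The map `f(x,y) = (xy + c, x)`. -/
noncomputable def fc (c : ℝ) : ℝ × ℝ → ℝ × ℝ := fun z => (z.1 * z.2 + c, z.1)

/-- `a₁ = (1 - √(1-4c))/2`. -/
noncomputable def a1 (c : ℝ) : ℝ := (1 - Real.sqrt (1 - 4 * c)) / 2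

/-- `a₂ = (1 + √(1-4c))/2`. -/
noncomputable def a2 (c : ℝ) : ℝ := (1 + Real.sqrt (1 - 4 * c)) / 2

/-- `w` is a backward orbit of `z` under `fc c`: `w 0 = z` and `f(w (n+1)) = w n`. -/
def IsBackwardOrbit (c : ℝ) (z : ℝ × ℝ) (w : ℕ → ℝ × ℝ) : Prop :=
  w 0 = z ∧ ∀ n : ℕ, fc c (w (n + 1)) = w n

/-- The set `Z = Z' \ {θ, p, f(p), f²(p)}` from the paper. -/
noncomputable def Zset (c : ℝ) : Set (ℝ × ℝ) :=
  (Icc (0 : ℝ) (a2 c) ×ˢ Ici (a2 c) ∪ Icc (-1 : ℝ) 0 ×ˢ Ici (1 + c) ∪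
      Iic (-1 : ℝ) ×ˢ Icc (0 : ℝ) (1 + c) ∪ Iic (-1 : ℝ) ×ˢ Icc (-1 : ℝ) 0 ∪
      Icc (-1 : ℝ) 0 ×ˢ Iic (-1 : ℝ) ∪ Icc (0 : ℝ) (1 + c) ×ˢ Iic (-1 : ℝ) ∪
      Ici (1 + c) ×ˢ Icc (-1 : ℝ) 0 ∪ Icc (1 + c) (a2 c) ×ˢ Icc (0 : ℝ) (a2 c) ∪
      Ici (a2 c) ×ˢ Icc (0 : ℝ) (a2 c)) \
    {((a2 c, a2 c) : ℝ × ℝ), (-1, -1), (1 + c, -1), (-1, 1 + c)}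

lemma geo_bdd (x : ℕ → ℝ) (r M : ℝ) (hr : 1 < r) (h : ∀ k, r * x k ≤ x (k+1))
    (hM : ∀ k, x k ≤ M) : x 0 ≤ 0 := by
  by_contra! h0
  have h1 : ∀ k, r ^ k * x 0 ≤ x k := by
    intro k
    induction k with
    | zero => simp
    | succ k ih =>
      have := h k
      have h2 : r * (r ^ k * x 0) ≤ r * x k := by gcongr
      rw [pow_succ]; nlinarith
  obtain ⟨k, hk⟩ := pow_unbounded_of_one_lt (M / x 0) hr
  rw [div_lt_iff₀ h0] at hk
  linarith [h1 k, hM k]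

def RA (a u v : ℝ) : Prop := (0 ≤ u ∧ u ≤ a) ∧ a ≤ v
def RH1 (c a u v : ℝ) : Prop := (1 + c ≤ u ∧ u ≤ a) ∧ (0 ≤ v ∧ v ≤ a)
def RH2 (a u v : ℝ) : Prop := a ≤ u ∧ (0 ≤ v ∧ v ≤ a)
def QQ (c u v : ℝ) : Prop :=
  ((-1 ≤ u ∧ u ≤ 0) ∧ 1 + c ≤ v) ∨ ((-1 ≤ u ∧ u ≤ 0) ∧ v ≤ -1) ∨ ((0 ≤ u ∧ u ≤ 1 + c) ∧ v ≤ -1)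
def RR (c u v : ℝ) : Prop :=
  (u ≤ -1 ∧ (0 ≤ v ∧ v ≤ 1 + c)) ∨ (u ≤ -1 ∧ (-1 ≤ v ∧ v ≤ 0)) ∨ (1 + c ≤ u ∧ (-1 ≤ v ∧ v ≤ 0))

lemma stepA (c a u v y : ℝ) (hc2 : c < 0) (ha : 1 < a) (haa : a * a = a - c)
    (h : v * y = u - c) (hA : RA a u v) : RH2 a v y := by
  obtain ⟨⟨h1, h2⟩, h3⟩ := hA
  have hy : 0 < y := by
    by_contra! hy
    nlinarith
  refine ⟨h3, hy.le, ?_⟩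
  by_contra! hy2
  nlinarith

lemma stepH2 (c a u v y : ℝ) (hc2 : c < 0) (ha : 1 < a) (haa : a * a = a - c)
    (h : v * y = u - c) (hA : RH2 a u v) : RA a v y := by
  obtain ⟨h3, h1, h2⟩ := hA
  refine ⟨⟨h1, h2⟩, ?_⟩
  rcases h1.eq_or_lt with h0 | hv
  · rw [← h0, zero_mul] at h; linarith
  by_contra! hy2
  nlinarith

lemma stepH1 (c a u v y : ℝ) (hc1 : -1 < c) (hc2 : c < 0) (ha : 1 < a) (haa : a * a = a - c)
    (h : v * y = u - c) (hA : RH1 c a u v) : RH1 c a v y ∨ RA a v y := by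
  obtain ⟨⟨h3, h4⟩, h1, h2⟩ := hA
  have hy : 0 < y := by
    by_contra! hy
    nlinarith
  rcases le_total y a with hya | hya
  · left
    refine ⟨⟨?_, h2⟩, hy.le, hya⟩
    by_contra! hv
    have e1 : v * y < (1 + c) * a := by
      calc v * y < (1 + c) * y := by gcongr
        _ ≤ (1 + c) * a := by gcongr; linarith
    have hc : c = a - a * a := by linarith
    have e2 : 0 ≤ (a - 1)^2 * (a + 1) := by positivity
    have : (1 + c) * a = 1 - (a - 1)^2 * (a + 1) := by rw [hc]; ring
    linarith
  · right; exact ⟨⟨h1, h2⟩, hya⟩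

lemma stepQ (c a u v y : ℝ) (hc1 : -1 < c) (hc2 : c < 0) (ha : 1 < a) (haa : a * a = a - c)
    (h : v * y = u - c) (hQ : QQ c u v) : RR c v y ∨ RA a v y ∨ RH1 c a v y ∨ RH2 a v y := by
  rcases hQ with ⟨⟨h1, h2⟩, h3⟩ | ⟨⟨h1, h2⟩, h3⟩ | ⟨⟨h1, h2⟩, h3⟩
  · have hy : -1 ≤ y := by
      by_contra! hy
      nlinarith
    rcases le_total y 0 with hy0 | hy0
    · left; right; right; exact ⟨h3, hy, hy0⟩
    · right
      rcases le_total v a with hva | hva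
      · rcases le_total y a with hya | hya
        · right; left; exact ⟨⟨h3, hva⟩, hy0, hya⟩
        · left; exact ⟨⟨by linarith, hva⟩, hya⟩
      · right; right
        refine ⟨hva, hy0, ?_⟩
        by_contra! hy2
        nlinarith
  · left
    have hy : -1 ≤ y := by
      by_contra! hy
      nlinarith
    rcases le_total y 0 with hy0 | hy0
    · right; left; exact ⟨h3, hy, hy0⟩
    · left; refine ⟨h3, hy0, ?_⟩
      by_contra! hy
      nlinarith
  · left; right; left
    refine ⟨h3, ?_, ?_⟩
    · by_contra! hy
      nlinarith
    · by_contra! hy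
      nlinarith

lemma sC (c u v y : ℝ) (hc1 : -1 < c) (h : v * y = u - c) (h3 : u ≤ -1) (h1 : 0 ≤ v)
    (h2 : v ≤ 1 + c) : y ≤ -1 := by
  rcases h1.eq_or_lt with h0 | hv
  · rw [← h0, zero_mul] at h; linarith
  by_contra! hy
  nlinarith

lemma sD (c u v y : ℝ) (hc1 : -1 < c) (h : v * y = u - c) (h3 : u ≤ -1) (h1 : -1 ≤ v)
    (h2 : v ≤ 0) : 1 + c ≤ y := by
  rcases h2.eq_or_lt with h0 | hv
  · rw [h0, zero_mul] at h; linarith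
  by_contra! hy
  nlinarith

lemma sG (c u v y : ℝ) (hc1 : -1 < c) (hc2 : c < 0) (h : v * y = u - c) (h3 : 1 + c ≤ u)
    (h1 : -1 ≤ v) (h2 : v ≤ 0) : y ≤ -1 := by
  rcases h2.eq_or_lt with h0 | hv
  · rw [h0, zero_mul] at h; linarith
  by_contra! hy
  nlinarith

lemma stepR (c u v y : ℝ) (hc1 : -1 < c) (hc2 : c < 0)
    (h : v * y = u - c) (hQ : RR c u v) : QQ c v y := by
  rcases hQ with ⟨h3, h1, h2⟩ | ⟨h3, h1, h2⟩ | ⟨h3, h1, h2⟩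
  · right; right; refine ⟨⟨h1, h2⟩, ?_⟩
    exact sC c u v y hc1 h h3 h1 h2
  · left; refine ⟨⟨h1, h2⟩, ?_⟩
    exact sD c u v y hc1 h h3 h1 h2
  · right; left; refine ⟨⟨h1, h2⟩, ?_⟩
    exact sG c u v y hc1 hc2 h h3 h1 h2

noncomputable def NN (c b : ℝ) : ℝ := if 0 < b then b / (1 + c) else -b

lemma NNpos (c n : ℝ) (hc : 0 < 1 + c) (hn : 0 < n) : NN c ((1 + c) * n) = n := by
  unfold NN
  rw [if_pos (by positivity)]
  field_simp

lemma NNneg (c b : ℝ) (hb : b ≤ -1) : NN c b = -b := by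
  unfold NN
  rw [if_neg (by linarith)]

lemma quant (d m n : ℝ) (hd : 0 < d) (hd1 : d < 1) (hm : 1 ≤ m) (h : m * (m - 1 + d) ≤ d * n) :
    (1 + d) * (m - 1) ≤ n - 1 := by
  have h1 : d * d * (m - 1) ≤ m * (m - 1) := by
    apply mul_le_mul_of_nonneg_right _ (by linarith)
    nlinarith
  have h2 : d * ((1 + d) * (m - 1) + 1) ≤ d * n := by nlinarith
  have := le_of_mul_le_mul_left h2 hd
  linarith

lemma NNge (c u b : ℝ) (hc1 : -1 < c) (hQ : QQ c u b) : 1 ≤ NN c b := by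
  have hd : 0 < 1 + c := by linarith
  rcases hQ with ⟨⟨h1, h2⟩, h3⟩ | ⟨⟨h1, h2⟩, h3⟩ | ⟨⟨h1, h2⟩, h3⟩
  · unfold NN
    rw [if_pos (by linarith), le_div_iff₀ hd]; linarith
  · rw [NNneg c b h3]; linarith
  · rw [NNneg c b h3]; linarith

lemma NNone (c u b : ℝ) (hc1 : -1 < c) (hQ : QQ c u b) (hN : NN c b ≤ 1) :
    (b = 1 + c ∧ u ≤ 0) ∨ b = -1 := by
  have hd : 0 < 1 + c := by linarith
  rcases hQ with ⟨⟨h1, h2⟩, h3⟩ | ⟨⟨h1, h2⟩, h3⟩ | ⟨⟨h1, h2⟩, h3⟩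
  · unfold NN at hN
    rw [if_pos (by linarith), div_le_iff₀ hd] at hN
    left; constructor <;> linarith
  · rw [NNneg c b h3] at hN; right; linarith
  · rw [NNneg c b h3] at hN; right; linarith

lemma NNstep (c t b t' b' : ℝ) (hc1 : -1 < c) (hc2 : c < 0)
    (h : b * t' = t - c) (h' : t' * b' = b - c) (hQ : QQ c t b) (hR : RR c b t') :
    (1 + (1 + c)) * (NN c b - 1) ≤ NN c b' - 1 := by
  have hd : 0 < 1 + c := by linarith
  have hQ' := stepR c b t' b' hc1 hc2 h' hR
  rcases hR with ⟨h3, h1, h2⟩ | ⟨h3, h1, h2⟩ | ⟨h3, h1, h2⟩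
  · have ht : -1 ≤ t := by
      rcases hQ with ⟨⟨h1, h2⟩, h3⟩ | ⟨⟨h1, h2⟩, h3⟩ | ⟨⟨h1, h2⟩, h3⟩ <;> linarith
    have hb' : b' ≤ -1 := sC c b t' b' hc1 h' h3 h1 h2
    rw [NNneg c b h3, NNneg c b' hb']
    apply quant _ _ _ hd (by linarith) (by linarith)
    have e : (-b') * ((-b) * t') ≤ (-b') * (1 + c) := by
      apply mul_le_mul_of_nonneg_left _ (by linarith)
      linarith
    have : (-b') * ((-b) * t') = -b * (-b - 1 + (1 + c)) * (-1) * (-1) := by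
      linear_combination b * h'
    nlinarith
  · have ht : t ≤ 1 + c := by
      rcases hQ with ⟨⟨h1, h2⟩, h3⟩ | ⟨⟨h1, h2⟩, h3⟩ | ⟨⟨h1, h2⟩, h3⟩ <;> linarith
    have hb' : 1 + c ≤ b' := sD c b t' b' hc1 h' h3 h1 h2
    obtain ⟨n, rfl⟩ : ∃ n, b' = (1 + c) * n := ⟨b' / (1 + c), by field_simp⟩
    have hn : 0 < n := by
      by_contra! hn
      nlinarith
    rw [NNneg c b h3, NNpos c n hd hn]
    apply quant _ _ _ hd (by linarith) (by linarith)
    have e : ((1 + c) * n) * (b * t') ≤ ((1 + c) * n) * 1 := by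
      apply mul_le_mul_of_nonneg_left _ (by linarith)
      linarith
    have : ((1 + c) * n) * (b * t') = -b * (-b - 1 + (1 + c)) := by
      linear_combination b * h'
    linarith
  · have ht : -1 ≤ t := by
      rcases hQ with ⟨⟨h1, h2⟩, h3⟩ | ⟨⟨h1, h2⟩, h3⟩ | ⟨⟨h1, h2⟩, h3⟩ <;> linarith
    have hb' : b' ≤ -1 := sG c b t' b' hc1 hc2 h' h3 h1 h2
    obtain ⟨n, rfl⟩ : ∃ n, b = (1 + c) * n := ⟨b / (1 + c), by field_simp⟩
    have hn : 1 ≤ n := by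
      by_contra! hn
      nlinarith
    rw [NNneg c b' hb', NNpos c n hd (by linarith)]
    have e0 : n * (-t') ≤ 1 := by
      have : (1 + c) * (n * (-t')) ≤ (1 + c) * 1 := by linarith
      exact le_of_mul_le_mul_left this hd
    have e : (-b') * (n * (-t')) ≤ (-b') * 1 := by
      apply mul_le_mul_of_nonneg_left _ (by linarith)
      linarith
    have e2 : (-b') * (n * (-t')) = n * ((1 + c) * n - c) := by
      linear_combination n * h'
    have e3 : 0 ≤ (1 + c) * (n - 1) * (n - 1) :=
      mul_nonneg (mul_nonneg hd.le (by linarith)) (by linarith)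
    nlinarith

lemma caseA (c a M : ℝ) (s : ℕ → ℝ) (hc2 : c < 0) (ha : 1 < a) (haa : a * a = a - c)
    (hs : ∀ n, s (n+1) * s (n+2) = s n - c) (hM : ∀ n, s n ≤ M) (h0 : RA a (s 0) (s 1)) :
    ∀ n, s n = a := by
  have hA : ∀ k, RA a (s (2*k)) (s (2*k+1)) := by
    intro k
    induction k with
    | zero => exact h0
    | succ k ih =>
      have := stepA c a _ _ _ hc2 ha haa (hs (2*k)) ih
      exact stepH2 c a _ _ _ hc2 ha haa (hs (2*k+1)) this
  have hodd : ∀ k, s (2*k+1) = a := by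
    intro k
    have := geo_bdd (fun j => s (2*(k+j)+1) - a) (1 + 1/a) (M - a)
      (by have : 0 < 1 / a := by positivity
          linarith)
      (by
        intro j
        obtain ⟨⟨h1, h2⟩, h3⟩ := hA (k+j)
        obtain ⟨h4, h5, h6⟩ := stepA c a _ _ _ hc2 ha haa (hs (2*(k+j))) (hA (k+j))
        have e1 := hs (2*(k+j))
        have e2 := hs (2*(k+j)+1)
        show (1 + 1/a) * (s (2*(k+j)+1) - a) ≤ s (2*(k+j)+3) - a
        change s (2*(k+j)+2) * s (2*(k+j)+3) = _ at e2
        generalize s (2*(k+j)) = u at *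
        generalize s (2*(k+j)+1) = v at *
        generalize s (2*(k+j)+2) = x at *
        generalize s (2*(k+j)+3) = y at *
        have hx : 0 < x := by
          by_contra! hx
          nlinarith
        have hy : 0 < y := by
          by_contra! hy
          nlinarith
        have k1 : (v - c) * v ≤ (a * a) * y := by
          have : (v - c) * v = (u - c) * y := by rw [← e1, ← e2]; ring
          rw [this]; gcongr; linarith
        have k2 : a * a * ((1 + 1/a) * (v - a)) ≤ a * a * (y - a) := by
          have : a * a * ((1 + 1/a) * (v - a)) = (a * a + a) * (v - a) := by field_simp
          rw [this]
          nlinarith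
        exact le_of_mul_le_mul_left k2 (by positivity))
      (by intro j; simpa using hM _)
    simp only [add_zero] at this
    linarith [(hA k).2]
  have heven1 : ∀ k, s (2*k+2) = a := by
    intro k
    have e2 := hs (2*k+1)
    have o1 := hodd k
    have o2 := hodd (k+1)
    change s (2*k+3) = a at o2
    change s (2*k+2) * s (2*k+3) = _ at e2
    rw [o1, o2, ← haa] at e2
    exact mul_right_cancel₀ (by positivity) e2
  intro n
  rcases n with _ | n
  · have e := hs 0
    rw [hodd 0, heven1 0] at e
    linarith
  · rcases Nat.even_or_odd' n with ⟨k, rfl | rfl⟩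
    · exact hodd k
    · exact heven1 k

lemma caseH1 (c a : ℝ) (s : ℕ → ℝ) (hc1 : -1 < c) (hc2 : c < 0) (ha : 1 < a) (haa : a * a = a - c)
    (hs : ∀ n, s (n+1) * s (n+2) = s n - c) (h0 : ∀ n, 1 + c ≤ s n ∧ s n ≤ a) :
    Tendsto s atTop (𝓝 a) := by
  have h1 : ∀ n, a - s n ≤ (a - s 0) * (1/a)^n := by
    intro n
    induction n with
    | zero => simp
    | succ n ih =>
      have e := hs n
      have h2 : a * (a - s (n+1)) ≤ a - s n := by
        nlinarith [h0 (n+1), h0 (n+2)]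
      have h3 : a - s (n+1) ≤ (a - s n) * (1/a) := by
        rw [mul_one_div, le_div_iff₀ (by linarith)]; linarith
      calc _ ≤ _ := h3
        _ ≤ ((a - s 0) * (1/a)^n) * (1/a) := by gcongr
        _ = _ := by ring
  have h2 : Tendsto (fun n : ℕ => a - (a - s 0) * (1/a)^n) atTop (𝓝 a) := by
    have := tendsto_pow_atTop_nhds_zero_of_lt_one (r := 1/a) (by positivity)
      (by rw [div_lt_one (by linarith)]; exact ha)
    simpa using (this.const_mul (a - s 0)).const_sub a
  refine tendsto_of_tendsto_of_tendsto_of_le_of_le h2 tendsto_const_nhds ?_ ?_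
  · intro n; have := h1 n; show a - (a - s 0) * (1/a)^n ≤ s n; linarith
  · intro n; exact (h0 n).2

def GD (c a u v : ℝ) : Prop := RA a u v ∨ RH1 c a u v ∨ RH2 a u v

lemma caseGood (c a M : ℝ) (s : ℕ → ℝ) (hc1 : -1 < c) (hc2 : c < 0) (ha : 1 < a)
    (haa : a * a = a - c)
    (hs : ∀ n, s (n+1) * s (n+2) = s n - c) (hM : ∀ n, s n ≤ M) (N : ℕ)
    (h0 : GD c a (s N) (s (N+1))) :
    Tendsto s atTop (𝓝 a) := by
  have key : ∀ N, RA a (s N) (s (N+1)) → Tendsto s atTop (𝓝 a) := by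
    intro N hN
    rw [← tendsto_add_atTop_iff_nat N]
    have := caseA c a M (fun n => s (n + N)) hc2 ha haa
      (by intro n; have := hs (n+N); simpa [add_right_comm] using this) (fun n => hM _)
      (by simpa [add_comm] using hN)
    simp only [this]
    exact tendsto_const_nhds
  by_cases hex : ∃ N, RA a (s N) (s (N+1))
  · exact hex.elim key
  push Not at hex
  rcases h0 with h0 | h0 | h0
  · exact absurd h0 (hex N)
  · have hall : ∀ k, RH1 c a (s (k+N)) (s (k+N+1)) := by
      intro k
      induction k with
      | zero => simpa using h0
      | succ k ih =>
        rcases stepH1 c a _ _ _ hc1 hc2 ha haa (hs (k+N)) ih with h | h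
        · rw [show k + 1 + N = k + N + 1 by ring]; exact h
        · exact absurd h (hex _)
    rw [← tendsto_add_atTop_iff_nat N]
    exact caseH1 c a (fun n => s (n+N)) hc1 hc2 ha haa
      (by intro n; have := hs (n+N); simpa [add_right_comm] using this)
      (fun n => (hall n).1)
  · exact absurd (stepH2 c a _ _ _ hc2 ha haa (hs N) h0) (hex _)

lemma caseQ (c a M : ℝ) (s : ℕ → ℝ) (hc1 : -1 < c) (hc2 : c < 0) (ha : 1 < a)
    (haa : a * a = a - c)
    (hs : ∀ n, s (n+1) * s (n+2) = s n - c) (hM : ∀ n, |s n| ≤ M)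
    (hng : ∀ n, ¬ GD c a (s n) (s (n+1))) (N : ℕ) (hQ : QQ c (s N) (s (N+1))) :
    (s (N+2) = -1 ∧ s (N+3) = -1) ∨ (s (N+2) = 1 + c ∧ s (N+3) = -1) ∨
      (s (N+2) = -1 ∧ s (N+3) = 1 + c) := by
  have hd : 0 < 1 + c := by linarith
  have hR : ∀ n, QQ c (s n) (s (n+1)) → RR c (s (n+1)) (s (n+2)) := by
    intro n h
    rcases stepQ c a _ _ _ hc1 hc2 ha haa (hs n) h with h | h
    · exact h
    · exact absurd h (hng (n+1))
  have hQ2 : ∀ n, QQ c (s n) (s (n+1)) → QQ c (s (n+2)) (s (n+3)) :=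
    fun n h => stepR c _ _ _ hc1 hc2 (hs (n+1)) (hR n h)
  have hN1 : ∀ n, QQ c (s n) (s (n+1)) → NN c (s (n+1)) ≤ 1 := by
    intro n h
    have hall : ∀ k, QQ c (s (n+2*k)) (s (n+2*k+1)) := by
      intro k
      induction k with
      | zero => exact h
      | succ k ih => exact hQ2 _ ih
    have := geo_bdd (fun k => NN c (s (n+2*k+1)) - 1) (1 + (1 + c)) (M / (1 + c) + M) (by linarith)
      (fun k => NNstep c _ _ _ _ hc1 hc2 (hs _) (hs (n+2*k+1)) (hall k) (hR _ (hall k)))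
      (by
        intro k
        have h1 := hM (n+2*k+1)
        have h0 : 0 ≤ M := (abs_nonneg _).trans h1
        have h2 := abs_le.1 h1
        have h3 : 0 ≤ M / (1 + c) := by positivity
        show NN c (s (n+2*k+1)) - 1 ≤ _
        unfold NN
        split_ifs
        · have : s (n+2*k+1) / (1 + c) ≤ M / (1 + c) := by gcongr; exact h2.2
          linarith
        · linarith)
    simp only [mul_zero, add_zero] at this
    linarith
  have q2 := hQ2 N hQ
  have e := hs (N+1)
  change s (N+2) * s (N+3) = _ at e
  rcases NNone c _ _ hc1 hQ (hN1 _ hQ) with ⟨h1, h2⟩ | h1 <;>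
  rcases NNone c _ _ hc1 q2 (hN1 _ q2) with ⟨h3, h4⟩ | h3 <;> rw [h1, h3] at e
  · exfalso; nlinarith
  · left; exact ⟨by linarith, h3⟩
  · right; right
    refine ⟨?_, h3⟩
    apply mul_right_cancel₀ hd.ne'
    linarith
  · right; left; exact ⟨by linarith, h3⟩

theorem main17 (c : ℝ) (hc1 : -1 < c) (hc2 : c < 0) :
    ∀ z ∈ Zset c, ∀ w : ℕ → ℝ × ℝ, IsBackwardOrbit c z w →
      (∃ M : ℝ, ∀ n : ℕ, ‖w n‖ ≤ M) → Tendsto w atTop (𝓝 (a2 c, a2 c)) := by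
  rintro z hz w ⟨hw0, hw⟩ ⟨M, hM⟩
  have hsq : Real.sqrt (1 - 4*c) * Real.sqrt (1 - 4*c) = 1 - 4*c :=
    Real.mul_self_sqrt (by linarith)
  have hs1 : 1 < Real.sqrt (1 - 4*c) := by
    rw [Real.lt_sqrt (by norm_num)]; linarith
  have ha : 1 < a2 c := by unfold a2; linarith
  have haa : a2 c * a2 c = a2 c - c := by unfold a2; linarith
  unfold Zset at hz
  generalize a2 c = a at *
  set s : ℕ → ℝ := fun n => (w n).1 with hsdef
  have hy : ∀ n, (w n).2 = s (n+1) := by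
    intro n; rw [← hw n]; rfl
  have hs : ∀ n, s (n+1) * s (n+2) = s n - c := by
    intro n
    have : (fc c (w (n+1))).1 = (w n).1 := by rw [hw n]
    simp only [fc] at this
    rw [hy] at this
    show (w (n+1)).1 * s (n+2) = (w n).1 - c
    rw [← this]; ring
  have hsM : ∀ n, |s n| ≤ M := by
    intro n
    exact (norm_fst_le (w n)).trans (hM n)
  have hsM' : ∀ n, s n ≤ M := fun n => (le_abs_self _).trans (hsM n)
  have hlim : Tendsto s atTop (𝓝 a) → Tendsto w atTop (𝓝 (a, a)) := by
    intro h
    have h2 := (tendsto_add_atTop_iff_nat 1).2 h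
    refine (h.prodMk_nhds h2).congr ?_
    intro n
    exact Prod.ext rfl (hy n).symm
  by_cases hex : ∃ n, GD c a (s n) (s (n+1))
  · obtain ⟨N, hN⟩ := hex
    exact hlim (caseGood c a M s hc1 hc2 ha haa hs hsM' N hN)
  push Not at hex
  exfalso
  obtain ⟨hzZ, hzn⟩ := hz
  have hz1 : z.1 = s 0 := by rw [← hw0]
  have hz2 : z.2 = s 1 := by rw [← hw0]; exact hy 0
  have hstart : QQ c (s 0) (s 1) ∨ RR c (s 0) (s 1) := by
    have h0 := hex 0
    simp only [mem_union, mem_prod, mem_Icc, mem_Ici, mem_Iic, hz1, hz2] at hzZ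
    simp only [zero_add] at h0
    rcases hzZ with (((((((h | h) | h) | h) | h) | h) | h) | h) | h
    · exact absurd (Or.inl h) h0
    · exact Or.inl (Or.inl h)
    · exact Or.inr (Or.inl h)
    · exact Or.inr (Or.inr (Or.inl h))
    · exact Or.inl (Or.inr (Or.inl h))
    · exact Or.inl (Or.inr (Or.inr h))
    · exact Or.inr (Or.inr (Or.inr h))
    · exact absurd (Or.inr (Or.inl h)) h0
    · exact absurd (Or.inr (Or.inr h)) h0
  have hQ : ∃ N, QQ c (s N) (s (N+1)) := by
    rcases hstart with h | h
    · exact ⟨0, h⟩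
    · exact ⟨1, stepR c _ _ _ hc1 hc2 (hs 0) h⟩
  obtain ⟨N, hN⟩ := hQ
  have hcyc := caseQ c a M s hc1 hc2 ha haa hs hsM hex N hN
  have hdown : ∀ n, ((s n = -1 ∧ s (n+1) = -1) ∨ (s n = 1 + c ∧ s (n+1) = -1) ∨
      (s n = -1 ∧ s (n+1) = 1 + c)) → ((s 0 = -1 ∧ s 1 = -1) ∨ (s 0 = 1 + c ∧ s 1 = -1) ∨
      (s 0 = -1 ∧ s 1 = 1 + c)) := by
    intro n
    induction n with
    | zero => exact id
    | succ n ih =>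
      intro h
      apply ih
      have e := hs n
      rcases h with ⟨h1, h2⟩ | ⟨h1, h2⟩ | ⟨h1, h2⟩ <;>
        rw [show n + 1 + 1 = n + 2 from rfl] at h2 <;> rw [h1, h2] at e
      · right; left; exact ⟨by linarith, h1⟩
      · right; right; exact ⟨by linarith, h1⟩
      · left; exact ⟨by linarith, h1⟩
  have := hdown (N+2) hcyc
  apply hzn
  have hzz : z = (s 0, s 1) := Prod.ext hz1 hz2
  rw [hzz]
  rcases this with ⟨h1, h2⟩ | ⟨h1, h2⟩ | ⟨h1, h2⟩ <;> rw [h1, h2] <;> simp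

theorem stmt17 (c : ℝ) (hc1 : -1 < c) (hc2 : c < 0) :
    (∀ z ∈ Zset c, ∀ w : ℕ → ℝ × ℝ, IsBackwardOrbit c z w →
      (∃ M : ℝ, ∀ n : ℕ, ‖w n‖ ≤ M) → Tendsto w atTop (𝓝 (a2 c, a2 c))) ∧
    Zset c ∩ {z : ℝ × ℝ | ∃ w : ℕ → ℝ × ℝ, IsBackwardOrbit c z w ∧
        ∃ M : ℝ, ∀ n : ℕ, ‖w n‖ ≤ M} ⊆
      {z : ℝ × ℝ | ∃ w : ℕ → ℝ × ℝ, IsBackwardOrbit c z w ∧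
        Tendsto w atTop (𝓝 (a2 c, a2 c))} := by
  refine ⟨main17 c hc1 hc2, ?_⟩
  rintro z ⟨hz, w, hw, hM⟩
  exact ⟨w, hw, main17 c hc1 hc2 z hz w hw hM⟩
end

section
/- Let c ∈ ℝ with -1 < c < 0. If z ∈ Y \ {α}, then z has no backward orbit entirely contained in Y; that is, for every backward orbit (wₙ)_{n≥0} of z there exists N ∈ ℕ such that w_N ∉ Y. -/
open Set Filter Topology

theorem aux_const (b : ℝ) (hb1 : b < 1) (u : ℕ → ℝ)
    (h0 : ∀ n, 0 ≤ u n) (hb : ∀ n, u n ≤ b) (hu : ∀ n, u n = b - u (n+1) * u (n+2)) :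
    ∃ M, ∀ n, u n = M := by
  have bdA : BddAbove (range u) := ⟨b, by rintro _ ⟨n, rfl⟩; exact hb n⟩
  have bdB : BddBelow (range u) := ⟨0, by rintro _ ⟨n, rfl⟩; exact h0 n⟩
  obtain ⟨M, hM⟩ : ∃ M, M = ⨆ n, u n := ⟨_, rfl⟩
  obtain ⟨m, hm⟩ : ∃ m, m = ⨅ n, u n := ⟨_, rfl⟩
  have uM : ∀ n, u n ≤ M := fun n => hM ▸ le_ciSup bdA n
  have um : ∀ n, m ≤ u n := fun n => hm ▸ ciInf_le bdB n
  have Mle : ∀ t, (∀ n, u n ≤ t) → M ≤ t := fun t h => hM ▸ ciSup_le h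
  have lem : ∀ t, (∀ n, t ≤ u n) → t ≤ m := fun t h => hm ▸ le_ciInf h
  have m0 : 0 ≤ m := lem 0 h0
  have Mb : M ≤ b := Mle b hb
  have mM : m ≤ M := (um 0).trans (uM 0)
  have key : ∀ n, u n = b - u (n+2) * (b - u (n+2) * u (n+3)) := by
    intro n
    have h1 := hu n
    have h2 : u (n+1) = b - u (n+2) * u (n+3) := hu (n+1)
    rw [← h2]; linarith [mul_comm (u (n+1)) (u (n+2))]
  have h1 : b - M^2 ≤ m := by
    apply lem
    intro n
    have := hu n
    have := mul_le_mul (uM (n+1)) (uM (n+2)) (h0 _) (m0.trans mM)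
    nlinarith
  have hMm : M ≤ m := by
    by_cases hA : M^2 + M ≤ b
    · linarith
    have hA' : b - M < M * (b - M^2) := by
      nlinarith [mul_pos (sub_pos.2 (lt_of_le_of_lt Mb hb1)) (sub_pos.2 (not_le.1 hA))]
    have hB : M ≤ b - min (m * (b - m*M)) (M * (b - M^2)) := by
      apply Mle
      intro n
      have hk := key n
      have hp1 := um (n+2)
      have hp2 := uM (n+2)
      have hp0 := h0 (n+2)
      have hq := uM (n+3)
      generalize u (n+2) = p at *
      generalize u (n+3) = q at *
      have h3 : p * (b - p * M) ≤ p * (b - p * q) := by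
        apply mul_le_mul_of_nonneg_left _ hp0
        nlinarith
      have h4 : min (m * (b - m*M)) (M * (b - M^2)) ≤ p * (b - p * M) := by
        by_cases hs : M * (p + m) ≤ b
        · refine (min_le_left _ _).trans ?_
          nlinarith [mul_nonneg (sub_nonneg.2 hp1) (sub_nonneg.2 hs)]
        · refine (min_le_right _ _).trans ?_
          have : b ≤ M * (p + M) := by nlinarith
          nlinarith [mul_nonneg (sub_nonneg.2 hp2) (sub_nonneg.2 this)]
      linarith
    have hC : m * (b - m*M) ≤ b - M := by
      rcases min_choice (m * (b - m*M)) (M * (b - M^2)) with h | h <;> rw [h] at hB <;> linarith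
    have hD : M + m * M ≤ b := by
      have : 0 < 1 - m := by linarith
      by_contra hcon
      nlinarith [mul_pos this (sub_pos.2 (not_le.1 hcon))]
    by_cases hE : b ≤ 2 * m * M
    · nlinarith
    have hF : b - M * (b - m * M) ≤ m := by
      apply lem
      intro n
      have hk := key n
      have hp2 := uM (n+2)
      have hp0 := h0 (n+2)
      have hq := um (n+3)
      generalize u (n+2) = p at *
      generalize u (n+3) = q at *
      have h3 : p * (b - p * q) ≤ p * (b - p * m) := by
        apply mul_le_mul_of_nonneg_left _ hp0
        nlinarith
      have : m * (M + p) ≤ b := by nlinarith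
      nlinarith [mul_nonneg (sub_nonneg.2 hp2) (sub_nonneg.2 this)]
    have hG : b ≤ m + m * M := by
      have : 0 < 1 - M := by linarith
      by_contra hcon
      nlinarith [mul_pos this (sub_pos.2 (not_le.1 hcon))]
    linarith
  exact ⟨M, fun n => le_antisymm (uM n) (hMm.trans (um n))⟩

theorem stmt19 (c : ℝ) (hc1 : -1 < c) (hc2 : c < 0) (z : ℝ × ℝ)
    (hz : z ∈ Icc c 0 ×ˢ Icc c 0 \ {((a1 c, a1 c) : ℝ × ℝ)})
    (w : ℕ → ℝ × ℝ) (hw : IsBackwardOrbit c z w) :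
    ∃ N : ℕ, w N ∉ Icc c 0 ×ˢ Icc c 0 := by
  by_contra hcon
  push Not at hcon
  obtain ⟨hw0, hw1⟩ := hw
  have e1 : ∀ n, (w (n+1)).1 * (w (n+1)).2 + c = (w n).1 := fun n => congrArg Prod.fst (hw1 n)
  have e2 : ∀ n, (w (n+1)).1 = (w n).2 := fun n => congrArg Prod.snd (hw1 n)
  obtain ⟨M, hM⟩ := aux_const (-c) (by linarith) (fun n => -(w n).1)
    (fun n => by have := (hcon n).1.2; simpa using this)
    (fun n => by have := (hcon n).1.1; simpa using this)
    (fun n => by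
      have h1 := e1 n
      have h2 : (w (n+2)).1 = (w (n+1)).2 := e2 (n+1)
      simp only [h2]; linarith)
  have hx : (w 0).1 ≤ 0 := (hcon 0).1.2
  have h0 := hM 0
  have h1 := hM 1
  have h2 := hM 2
  have g1 : (w 1).1 * (w 1).2 + c = (w 0).1 := e1 0
  have g2 : (w 1).1 = (w 0).2 := e2 0
  have g3 : (w 2).1 = (w 1).2 := e2 1
  have k1 : (w 1).1 = (w 0).1 := by linarith
  have k2 : (w 1).2 = (w 0).1 := by linarith
  rw [k1, k2] at g1
  have hs : Real.sqrt (1 - 4 * c) = 1 - 2 * (w 0).1 := by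
    rw [show 1 - 4 * c = (1 - 2 * (w 0).1)^2 by nlinarith]
    exact Real.sqrt_sq (by linarith)
  apply hz.2
  rw [← hw0, mem_singleton_iff]
  have ha : a1 c = (w 0).1 := by rw [a1, hs]; ring
  ext
  · simp [ha]
  · simp only [ha]; linarith
end
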